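/- Let G be a finite group with tp(G) > 4/81. Then G is nilpotent or G has a section isomorphic to one of the groups A_4, D_3, D_5, D_7 (where D_n denotes the dihedral group of order 2n), i.e. there exist subgroups N ⊴ H ≤ G with H/N isomorphic to one of these four groups. -/

import Mathlib

/-!
Sorting the elements of `G` by double cosets gives `P_G(H) = ∏ m_D! / m_D ^ m_D`, where `D` runs
over the double cosets of `H` and `m_D` is the number of left cosets of `H` in `D`. Hence `tp` does
not decrease when `G` is replaced by a section.

A non-nilpotent `G` has a section `X` that is not nilpotent although all proper subgroups and proper
quotients of `X` are. Normalizers grow in nilpotent groups, so a non-normal maximal subgroup `M` of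
`X` is malnormal: apart from `M` itself, each double coset of `M` consists of `m = |M|` left cosets.
So `(X : M) = 1 + k * m` and `P_X(M) = (m! / m ^ m) ^ k`. As `4/81` is the value at `m = 3` and
`k = 2`, the bound leaves `m = 2` with `k ≤ 4`, and `m = 3` or `m = 4` with `k = 1`.

If `m` is even, two conjugate involutions, `s` in `M` and `t` outside, have a product of odd order:
otherwise both would commute with an involution `z`, and malnormality would force first `z` and
then `t` into `M`. They generate a dihedral group containing some `D_p`, where `p` is an odd prime
divisor of `|X|`, hence of `1 + k * m ≤ 9`. If `m = 3`, then `X` has order 12 and acts faithfully on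
the four cosets of `M`, so `X ≅ A_4`.
-/

open scoped Pointwise Classical

/-- `T` is simultaneously a left transversal for `H` (each left coset `gH` contains exactly one
element of `T`) and a right transversal for `K` (each right coset `Kg` contains exactly one
element of `T`). -/
def IsDoubleTransversal {G : Type*} [Group G] (H K : Subgroup G) (T : Set G) : Prop :=
  (∀ g : G, ∃! t : G, t ∈ T ∧ g⁻¹ * t ∈ H) ∧ (∀ g : G, ∃! t : G, t ∈ T ∧ t * g⁻¹ ∈ K)

/-- `|DT_G(H,K)|`: the number of common transversals for the pair `(H, K)`. -/
noncomputable def numDT {G : Type*} [Group G] (H K : Subgroup G) : ℕ :=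
  Nat.card {T : Set G // IsDoubleTransversal H K T}

/-- `P_G(H,K) = |DT_G(H,K)| / |H| ^ (G:H)`, the common transversal probability. -/
noncomputable def transProb {G : Type*} [Group G] (H K : Subgroup G) : ℚ :=
  (numDT H K : ℚ) / (Nat.card H : ℚ) ^ H.index

/-- `tp(G)`: the minimum of `P_G(H) = P_G(H,H)` over all subgroups `H ≤ G`. -/
noncomputable def tp (G : Type*) [Group G] [Finite G] : ℚ :=
  haveI : Finite (Subgroup G) :=
    Finite.of_injective (fun H : Subgroup G => (H : Set G)) SetLike.coe_injective
  haveI : Fintype (Subgroup G) := Fintype.ofFinite _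
  Finset.univ.inf' Finset.univ_nonempty (fun H : Subgroup G => transProb H H)

/-- `G` has a section isomorphic to `X`: there are subgroups `N ⊴ H ≤ G` with `H/N ≅ X`,
equivalently (as formalized here) some subgroup of `G` admits a surjective homomorphism
onto `X`. -/
def HasSectionIsomorphicTo (G : Type*) [Group G] (X : Type*) [Group X] : Prop :=
  ∃ (H : Subgroup G) (φ : H →* X), Function.Surjective φ

/-- The probability that a random self-map of a set with `m` elements is bijective. -/
def bijProb (m : ℕ) : ℚ := m.factorial / m ^ m

theorem bijProb_nonneg (m : ℕ) : 0 ≤ bijProb m := by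
  unfold bijProb
  positivity

theorem antitone_bijProb : Antitone bijProb := by
  refine antitone_nat_of_succ_le fun m => ?_
  have hpow : (m : ℚ) ^ m ≤ (m + 1) ^ m := by gcongr; linarith
  have hpos : (0 : ℚ) < m ^ m := by exact_mod_cast Nat.pow_self_pos
  calc bijProb (m + 1) = m.factorial / (m + 1) ^ m := by
        simp only [bijProb, Nat.factorial_succ, Nat.cast_mul, Nat.cast_succ, pow_succ']
        exact mul_div_mul_left _ _ (by positivity)
    _ ≤ bijProb m := by unfold bijProb; gcongr

theorem bijProb_le_one (m : ℕ) : bijProb m ≤ 1 :=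
  (antitone_bijProb m.zero_le).trans_eq (by norm_num [bijProb])

theorem factorial_mul_pow_div_pow {m c h : ℕ} (hh : h ≠ 0) (hmc : m ≠ 0 → m * c = h) :
    ((m.factorial * c ^ m : ℕ) : ℚ) / (h : ℚ) ^ m = bijProb m := by
  rcases eq_or_ne m 0 with rfl | hm
  · simp [bijProb]
  · have hc : (c : ℚ) ≠ 0 := by
      intro hc
      exact hh (by rw [← hmc hm, Nat.cast_eq_zero.1 hc, mul_zero])
    rw [← hmc hm, bijProb]
    push_cast
    rw [mul_pow]
    exact mul_div_mul_right _ _ (pow_ne_zero _ hc)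

section CommonTransversals

theorem bijOn_range_iff {α β γ : Type*} {s : α → β} (hs : Function.Injective s) {f : β → γ} :
    Set.BijOn f (Set.range s) Set.univ ↔ Function.Bijective (f ∘ s) := by
  rw [← Set.bijOn_univ, Set.bijOn_comp_iff hs.injOn, Set.image_univ]

variable {A B B' Q : Type*}

theorem card_equiv_comp_eq [Finite B] [Finite B'] [Fintype Q] {u : B → Q} {v : B' → Q}
    (huv : ∀ D, Nat.card {b // u b = D} = Nat.card {b // v b = D}) :
    Nat.card {π : B ≃ B' // v ∘ π = u} = ∏ D, (Nat.card {b // u b = D}).factorial := by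
  let π₀ : B ≃ B' := Equiv.ofFiberEquiv fun D => (Finite.card_eq.1 (huv D)).some
  have hπ₀ : ∀ b, v (π₀ b) = u b := Equiv.ofFiberEquiv_map _
  let e : {σ : Equiv.Perm B // u ∘ σ = u} ≃ {π : B ≃ B' // v ∘ π = u} :=
    Equiv.subtypeEquiv (Equiv.equivCongr (Equiv.refl B) π₀) fun σ => by
      simp only [funext_iff, Function.comp_apply, Equiv.equivCongr_apply_apply, Equiv.refl_symm,
        Equiv.refl_apply, hπ₀]
  have := Fintype.ofFinite B
  rw [← Nat.card_congr e, Nat.card_eq_fintype_card, DomMulAct.stabilizer_card]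
  simp only [Nat.card_eq_fintype_card]

variable (p : A → B) (p' : A → B')

/-- The common transversals of `p` and `p'`, encoded as the sections of `p` along which `p'` is
bijective. -/
noncomputable def sectionEquivCommonTransversal :
    {s : B → A // (∀ b, p (s b) = b) ∧ Function.Bijective (p' ∘ s)} ≃
      {T : Set A // Set.BijOn p T Set.univ ∧ Set.BijOn p' T Set.univ} :=
  Equiv.ofBijective
    (fun s => ⟨Set.range s.1,
      (bijOn_range_iff (Function.LeftInverse.injective s.2.1)).2
        (Function.LeftInverse.comp_eq_id s.2.1 ▸ Function.bijective_id),
      (bijOn_range_iff (Function.LeftInverse.injective s.2.1)).2 s.2.2⟩) <| by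
    constructor
    · rintro ⟨s, hs, _⟩ ⟨s', hs', _⟩ h
      have hrange : Set.range s = Set.range s' := congrArg Subtype.val h
      refine Subtype.ext (funext fun b => ?_)
      obtain ⟨b', hb'⟩ : s b ∈ Set.range s' := hrange ▸ Set.mem_range_self b
      obtain rfl : b' = b := by rw [← hs' b', hb', hs]
      exact hb'.symm
    · rintro ⟨T, hT, hT'⟩
      choose s hsT hs using fun b => hT.surjOn (Set.mem_univ b)
      have hrange : Set.range s = T := (Set.range_subset_iff.2 hsT).antisymm fun t ht =>
        ⟨p t, hT.injOn (hsT _) ht (hs _)⟩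
      exact ⟨⟨s, hs, (bijOn_range_iff (Function.LeftInverse.injective hs)).1 (hrange ▸ hT')⟩,
        Subtype.ext hrange⟩

theorem card_section_eq_sum [Finite A] [Fintype B] [Fintype B'] :
    Nat.card {s : B → A // (∀ b, p (s b) = b) ∧ Function.Bijective (p' ∘ s)} =
      ∑ π : B ≃ B', ∏ b, Nat.card {a // p a = b ∧ p' a = π b} := by
  rw [← Nat.card_congr (Equiv.sigmaFiberEquiv fun
    s : {s : B → A // (∀ b, p (s b) = b) ∧ Function.Bijective (p' ∘ s)} =>
      Equiv.ofBijective _ s.2.2), Nat.card_sigma]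
  refine Finset.sum_congr rfl fun π _ => ?_
  rw [← Nat.card_pi]
  exact Nat.card_congr
    { toFun := fun s b => ⟨s.1.1 b, s.1.2.1 b, DFunLike.congr_fun s.2 b⟩
      invFun := fun s => ⟨⟨fun b => s b, fun b => (s b).2.1, by
        rw [show p' ∘ _ = π from funext fun b => (s b).2.2]
        exact π.bijective⟩, Equiv.ext fun b => (s b).2.2⟩
      left_inv := fun _ => rfl
      right_inv := fun _ => rfl }

variable {p p'} {u : B → Q} {v : B' → Q} {c : Q → ℕ}

theorem card_commonTransversal_eq_prod [Finite A] [Finite B] [Finite B'] [Fintype Q]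
    (hpp' : ∀ a, u (p a) = v (p' a))
    (hc : ∀ b b', u b = v b' → Nat.card {a // p a = b ∧ p' a = b'} = c (u b))
    (huv : ∀ D, Nat.card {b // u b = D} = Nat.card {b // v b = D}) :
    Nat.card {T : Set A // Set.BijOn p T Set.univ ∧ Set.BijOn p' T Set.univ} =
      ∏ D, (Nat.card {b // u b = D}).factorial * c D ^ Nat.card {b // u b = D} := by
  have := Fintype.ofFinite B
  have := Fintype.ofFinite B'
  have hprod (π : B ≃ B') : ∏ b, Nat.card {a // p a = b ∧ p' a = π b} =
      if v ∘ π = u then ∏ D, c D ^ Nat.card {b // u b = D} else 0 := by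
    split_ifs with hπ
    · simp only [hc _ _ (congrFun hπ.symm _)]
      rw [← Fintype.prod_fiberwise' u c]
      simp only [Finset.prod_const, Finset.card_univ, Nat.card_eq_fintype_card]
    · obtain ⟨b, hb⟩ := Function.ne_iff.1 hπ
      refine Finset.prod_eq_zero (Finset.mem_univ b) ?_
      have : IsEmpty {a // p a = b ∧ p' a = π b} :=
        ⟨fun ⟨a, ha, ha'⟩ => hb (by rw [Function.comp_apply, ← ha', ← hpp', ha])⟩
      exact Nat.card_of_isEmpty
  rw [← Nat.card_congr (sectionEquivCommonTransversal p p'), card_section_eq_sum]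
  simp only [hprod]
  rw [← Finset.sum_filter, Finset.sum_const, smul_eq_mul, Finset.prod_mul_distrib,
    ← card_equiv_comp_eq huv, Nat.card_eq_fintype_card, Fintype.card_subtype]

theorem card_fiber_eq_card_mul [Finite A] [Finite B'] {b : B} {D : Q} {n : ℕ}
    (hD : ∀ a, p a = b → v (p' a) = D)
    (hn : ∀ b', v b' = D → Nat.card {a // p a = b ∧ p' a = b'} = n) :
    Nat.card {a // p a = b} = Nat.card {b' // v b' = D} * n := by
  have := Fintype.ofFinite B'
  let q : {a // p a = b} → {b' // v b' = D} := fun a => ⟨p' a, hD a a.2⟩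
  have hq (b' : {b' // v b' = D}) : Nat.card {a // q a = b'} = n := by
    rw [← hn b' b'.2]
    exact Nat.card_congr <| (Equiv.subtypeEquivRight fun a => Subtype.ext_iff).trans
      (Equiv.subtypeSubtypeEquivSubtypeInter (p · = b) (p' · = b'))
  rw [← Nat.card_congr (Equiv.sigmaFiberEquiv q), Nat.card_sigma]
  simp only [hq, Finset.sum_const, Finset.card_univ, smul_eq_mul, Nat.card_eq_fintype_card]

/-- Both `m_D * c D` and `m'_D * c D` are the common fibre size `h`, so `m_D = m'_D` and each
`D` contributes `m_D! * (h / m_D) ^ m_D` to the count. -/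
theorem card_commonTransversal_div_pow [Finite A] [Finite B] [Finite B'] [Fintype Q] {h : ℕ}
    (hh : h ≠ 0) (hpp' : ∀ a, u (p a) = v (p' a))
    (hc : ∀ b b', u b = v b' → Nat.card {a // p a = b ∧ p' a = b'} = c (u b))
    (hp : ∀ b, Nat.card {a // p a = b} = h) (hp' : ∀ b', Nat.card {a // p' a = b'} = h) :
    (Nat.card {T : Set A // Set.BijOn p T Set.univ ∧ Set.BijOn p' T Set.univ} : ℚ) /
      h ^ Nat.card B = ∏ D, bijProb (Nat.card {b // u b = D}) := by
  have hv (D : Q) (hD : Nat.card {b // u b = D} ≠ 0) : Nat.card {b' // v b' = D} * c D = h := by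
    obtain ⟨⟨b, rfl⟩⟩ := (Nat.card_ne_zero.1 hD).1
    rw [← hp b]
    exact (card_fiber_eq_card_mul (fun a ha => by rw [← hpp', ha]) fun b' hb' =>
      hc b b' hb'.symm).symm
  have hu (D : Q) (hD : Nat.card {b' // v b' = D} ≠ 0) : Nat.card {b // u b = D} * c D = h := by
    obtain ⟨⟨b', rfl⟩⟩ := (Nat.card_ne_zero.1 hD).1
    rw [← hp' b']
    refine (card_fiber_eq_card_mul (fun a ha => by rw [hpp', ha]) fun b hb => ?_).symm
    simp only [and_comm, hc b b' hb, hb]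
  have huv (D : Q) : Nat.card {b // u b = D} = Nat.card {b' // v b' = D} := by
    have hne (hD : Nat.card {b // u b = D} = 0) : Nat.card {b' // v b' = D} = 0 := by
      by_contra hD'
      exact hh (by rw [← hu D hD', hD, zero_mul])
    rcases eq_or_ne (Nat.card {b // u b = D}) 0 with hD | hD
    · rw [hD, hne hD]
    · have hmul := hv D hD
      have hD' := left_ne_zero_of_mul (hmul ▸ hh)
      exact mul_right_cancel₀ (right_ne_zero_of_mul (hmul ▸ hh)) ((hu D hD').trans hmul.symm)
  have hB : Nat.card B = ∑ D, Nat.card {b // u b = D} := by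
    rw [← Nat.card_sigma, Nat.card_congr (Equiv.sigmaFiberEquiv u)]
  rw [card_commonTransversal_eq_prod hpp' hc huv, hB, ← Finset.prod_pow_eq_pow_sum,
    Nat.cast_prod, ← Finset.prod_div_distrib]
  exact Finset.prod_congr rfl fun D _ =>
    factorial_mul_pow_div_pow hh fun hD => hu D (huv D ▸ hD)

end CommonTransversals

section DoubleCosets

variable {G : Type*} [Group G]

/-- The double coset `KgH` that contains a left coset `gH`. -/
def doubleCosetOfLeft (K H : Subgroup G) : G ⧸ H → DoubleCoset.Quotient (K : Set G) H :=
  Quotient.map' id fun _ _ h => DoubleCoset.rel_iff.2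
    ⟨1, K.one_mem, _, QuotientGroup.leftRel_apply.1 h, by simp⟩

/-- The double coset `KgH` that contains a right coset `Kg`. -/
def doubleCosetOfRight (K H : Subgroup G) :
    Quotient (QuotientGroup.rightRel K) → DoubleCoset.Quotient (K : Set G) H :=
  Quotient.map' id fun _ _ h => DoubleCoset.rel_iff.2
    ⟨_, QuotientGroup.rightRel_apply.1 h, 1, H.one_mem, by simp⟩

/-- The number of left cosets of `H` in a double coset `KgH`. -/
noncomputable def numLeftCosets {K H : Subgroup G} (D : DoubleCoset.Quotient (K : Set G) H) : ℕ :=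
  Nat.card {q : G ⧸ H // doubleCosetOfLeft K H q = D}

theorem leftCoset_mk_eq_iff {H : Subgroup G} {g t : G} : (t : G ⧸ H) = g ↔ g⁻¹ * t ∈ H := by
  rw [eq_comm, QuotientGroup.eq]

theorem rightCoset_mk_eq_iff {K : Subgroup G} {g t : G} :
    Quotient.mk (QuotientGroup.rightRel K) t = Quotient.mk (QuotientGroup.rightRel K) g ↔
      t * g⁻¹ ∈ K := by
  rw [eq_comm, Quotient.eq, QuotientGroup.rightRel_apply]

theorem bijOn_univ_iff_existsUnique {α β : Type*} {f : α → β} {s : Set α} :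
    Set.BijOn f s Set.univ ↔ ∀ b, ∃! a, a ∈ s ∧ f a = b := by
  refine ⟨fun h b => ?_, fun h => ⟨Set.mapsTo_univ _ _, fun a ha a' ha' haa' => ?_, fun b _ => ?_⟩⟩
  · obtain ⟨a, ha, rfl⟩ := h.surjOn (Set.mem_univ b)
    exact ⟨a, ⟨ha, rfl⟩, fun a' ha' => h.injOn ha'.1 ha ha'.2⟩
  · exact (h (f a')).unique ⟨ha, haa'⟩ ⟨ha', rfl⟩
  · exact (h b).exists

theorem isDoubleTransversal_iff_bijOn {H K : Subgroup G} {T : Set G} :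
    IsDoubleTransversal H K T ↔
      Set.BijOn (QuotientGroup.mk : G → G ⧸ H) T Set.univ ∧
        Set.BijOn (Quotient.mk (QuotientGroup.rightRel K)) T Set.univ := by
  rw [bijOn_univ_iff_existsUnique, bijOn_univ_iff_existsUnique, IsDoubleTransversal,
    QuotientGroup.mk_surjective.forall, Quotient.mk_surjective.forall]
  simp only [leftCoset_mk_eq_iff, rightCoset_mk_eq_iff]

theorem numLeftCosets_mk_one (M : Subgroup G) :
    numLeftCosets (DoubleCoset.mk M M 1) = 1 := by
  rw [numLeftCosets, Nat.card_eq_one_iff_unique]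
  refine ⟨⟨fun ⟨q, hq⟩ ⟨q', hq'⟩ => Subtype.ext ?_⟩, ⟨⟨(1 : G), rfl⟩⟩⟩
  have heq (q : G ⧸ M) (hq : doubleCosetOfLeft M M q = DoubleCoset.mk M M 1) : q = (1 : G) := by
    induction q using QuotientGroup.induction_on with | H g => ?_
    obtain ⟨k, hk, h, hh, rfl⟩ := (DoubleCoset.eq M M _ _).1 hq.symm
    exact leftCoset_mk_eq_iff.2 (by simpa using mul_mem hk hh)
  exact (heq q hq).trans (heq q' hq').symm

theorem index_eq_sum_numLeftCosets (K H : Subgroup G) [H.FiniteIndex]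
    [Fintype (DoubleCoset.Quotient (K : Set G) H)] :
    H.index = ∑ D : DoubleCoset.Quotient (K : Set G) H, numLeftCosets D := by
  simp only [numLeftCosets]
  rw [← Nat.card_sigma, Nat.card_congr (Equiv.sigmaFiberEquiv _), Subgroup.index]

theorem card_mk_left_fiber (H : Subgroup G) (q : G ⧸ H) :
    Nat.card {g : G // (g : G ⧸ H) = q} = Nat.card H := by
  induction q using QuotientGroup.induction_on with
  | H x =>
    refine Nat.card_congr ((Equiv.mulLeft x⁻¹).subtypeEquiv fun g => ?_)
    rw [leftCoset_mk_eq_iff, Equiv.coe_mulLeft]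

theorem card_mk_right_fiber (K : Subgroup G) (q : Quotient (QuotientGroup.rightRel K)) :
    Nat.card {g : G // Quotient.mk (QuotientGroup.rightRel K) g = q} = Nat.card K := by
  induction q using Quotient.inductionOn with
  | h x =>
    refine Nat.card_congr ((Equiv.mulRight x⁻¹).subtypeEquiv fun g => ?_)
    rw [rightCoset_mk_eq_iff, Equiv.coe_mulRight]

/-- If `gH ⊆ KdH` and `Kg' ⊆ KdH`, then `gH = kdH` and `Kg' = Kdh` for some `k ∈ K` and `h ∈ H`, and
`y ↦ k⁻¹ y h⁻¹` maps `gH ∩ Kg'` onto `dH ∩ Kd`. -/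
theorem card_left_inter_right {K H : Subgroup G} {q : G ⧸ H}
    {q' : Quotient (QuotientGroup.rightRel K)} {d : G}
    (hq : doubleCosetOfLeft K H q = DoubleCoset.mk K H d)
    (hq' : doubleCosetOfRight K H q' = DoubleCoset.mk K H d) :
    Nat.card {g : G // (g : G ⧸ H) = q ∧ Quotient.mk (QuotientGroup.rightRel K) g = q'} =
      Nat.card {g : G // d⁻¹ * g ∈ H ∧ g * d⁻¹ ∈ K} := by
  induction q using QuotientGroup.induction_on with | H x => ?_
  induction q' using Quotient.inductionOn with | h x' => ?_
  obtain ⟨k, hk, h₁, hh₁, rfl⟩ := (DoubleCoset.eq K H d x).1 hq.symm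
  obtain ⟨k₁, hk₁, h, hh, rfl⟩ := (DoubleCoset.eq K H d x').1 hq'.symm
  refine Nat.card_congr (((Equiv.mulLeft k⁻¹).trans (Equiv.mulRight h⁻¹)).subtypeEquiv fun y => ?_)
  simp only [Equiv.trans_apply, Equiv.coe_mulLeft, Equiv.coe_mulRight, leftCoset_mk_eq_iff,
    rightCoset_mk_eq_iff]
  refine and_congr ?_ ?_
  · rw [← H.mul_mem_cancel_left hh₁, ← H.mul_mem_cancel_right (inv_mem hh)]
    group
  · rw [← K.mul_mem_cancel_right hk₁, ← K.mul_mem_cancel_left (inv_mem hk)]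
    group

theorem transProb_eq_prod [Finite G] {H K : Subgroup G}
    [Fintype (DoubleCoset.Quotient (K : Set G) H)] (hHK : Nat.card H = Nat.card K) :
    transProb H K = ∏ D : DoubleCoset.Quotient (K : Set G) H, bijProb (numLeftCosets D) := by
  rw [transProb, numDT, Nat.card_congr (Equiv.subtypeEquivRight fun _ =>
    isDoubleTransversal_iff_bijOn), Subgroup.index]
  exact card_commonTransversal_div_pow (u := doubleCosetOfLeft K H) (v := doubleCosetOfRight K H)
    (c := fun D => Nat.card {g : G // D.out⁻¹ * g ∈ H ∧ g * D.out⁻¹ ∈ K}) Nat.card_pos.ne'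
    (fun _ => rfl) (fun q q' h => card_left_inter_right (DoubleCoset.out_eq' K H _).symm
      (h.symm.trans (DoubleCoset.out_eq' K H _).symm))
    (card_mk_left_fiber H) fun q => (card_mk_right_fiber K q).trans hHK.symm

end DoubleCosets

instance {G : Type*} [Group G] [Finite G] (K H : Subgroup G) :
    Finite (DoubleCoset.Quotient (K : Set G) H) :=
  Quotient.finite _

section Comap

variable {A G : Type*} [Group A] [Group G] (f : A →* G) (K H : Subgroup G)

/-- The map on left cosets induced by a homomorphism. -/
def leftCosetMap : A ⧸ H.comap f → G ⧸ H :=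
  Quotient.map' f fun a b h => by
    rwa [QuotientGroup.leftRel_apply, Subgroup.mem_comap, map_mul, map_inv,
      ← QuotientGroup.leftRel_apply] at h

/-- The map on double cosets induced by a homomorphism. -/
def doubleCosetMap : DoubleCoset.Quotient (K.comap f : Set A) (H.comap f) →
    DoubleCoset.Quotient (K : Set G) H :=
  Quotient.map' f fun a b h => by
    obtain ⟨k, hk, c, hc, rfl⟩ := DoubleCoset.rel_iff.1 h
    exact DoubleCoset.rel_iff.2 ⟨f k, hk, f c, hc, by rw [map_mul, map_mul]⟩

theorem leftCosetMap_injective : Function.Injective (leftCosetMap f H) := by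
  intro q q' h
  induction q, q' using Quotient.inductionOn₂' with | h a b => ?_
  have hab := QuotientGroup.eq.1 h
  rw [← map_inv, ← map_mul] at hab
  exact QuotientGroup.eq.2 hab

theorem doubleCosetOfLeft_leftCosetMap (q : A ⧸ H.comap f) :
    doubleCosetOfLeft K H (leftCosetMap f H q) =
      doubleCosetMap f K H (doubleCosetOfLeft (K.comap f) (H.comap f) q) := by
  induction q using QuotientGroup.induction_on with | H a => rfl

variable {K H}

theorem exists_leftCosetMap_eq (hK : K ≤ f.range) {a : A} {q : G ⧸ H}
    (hq : doubleCosetOfLeft K H q = DoubleCoset.mk K H (f a)) :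
    ∃ q' : A ⧸ H.comap f, leftCosetMap f H q' = q ∧
      doubleCosetOfLeft (K.comap f) (H.comap f) q' = DoubleCoset.mk _ _ a := by
  induction q using QuotientGroup.induction_on with | H g => ?_
  obtain ⟨k, hk, h, hh, rfl⟩ := (DoubleCoset.eq K H _ _).1 hq.symm
  obtain ⟨k, rfl⟩ := hK hk
  refine ⟨(k * a : A), QuotientGroup.eq.2 (by simpa [mul_assoc] using hh), ?_⟩
  exact ((DoubleCoset.eq _ _ _ _).2 ⟨k, hk, 1, one_mem _, by simp⟩).symm

theorem doubleCosetMap_injective (hK : K ≤ f.range) :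
    Function.Injective (doubleCosetMap f K H) := by
  intro D D' h
  induction D, D' using Quotient.inductionOn₂' with | h a b => ?_
  obtain ⟨q, hq, hqa⟩ := exists_leftCosetMap_eq f hK (q := (f b : G ⧸ H)) h.symm
  obtain rfl : q = (b : A ⧸ H.comap f) := leftCosetMap_injective f H hq
  exact hqa.symm

theorem numLeftCosets_doubleCosetMap (hK : K ≤ f.range)
    (D : DoubleCoset.Quotient (K.comap f : Set A) (H.comap f)) :
    numLeftCosets (doubleCosetMap f K H D) = numLeftCosets D := by
  refine (Nat.card_congr <| Equiv.ofBijective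
    (Subtype.map (leftCosetMap f H) fun q hq => ?_) ⟨?_, fun ⟨q, hq⟩ => ?_⟩).symm
  · rw [doubleCosetOfLeft_leftCosetMap, hq]
  · exact Subtype.map_injective _ (leftCosetMap_injective f H)
  · induction D using Quotient.inductionOn' with | h a => ?_
    obtain ⟨q', hq', hq'a⟩ := exists_leftCosetMap_eq f hK hq
    exact ⟨⟨q', hq'a⟩, Subtype.ext hq'⟩

variable [Finite A] [Finite G]

theorem transProb_le_transProb_comap (hH : H ≤ f.range) :
    transProb H H ≤ transProb (H.comap f) (H.comap f) := by
  have := Fintype.ofFinite (DoubleCoset.Quotient (H : Set G) H)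
  have := Fintype.ofFinite (DoubleCoset.Quotient (H.comap f : Set A) (H.comap f))
  rw [transProb_eq_prod rfl, transProb_eq_prod rfl]
  simp only [← numLeftCosets_doubleCosetMap f hH]
  rw [← Finset.prod_image (f := fun D => bijProb (numLeftCosets D))
    (doubleCosetMap_injective f hH).injOn]
  exact Finset.prod_le_prod_of_subset_of_le_one (Finset.subset_univ _)
    (fun _ _ => bijProb_nonneg _) fun _ _ _ => bijProb_le_one _

theorem transProb_comap (hf : Function.Surjective f) (H : Subgroup G) :
    transProb (H.comap f) (H.comap f) = transProb H H := by
  have := Fintype.ofFinite (DoubleCoset.Quotient (H : Set G) H)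
  have := Fintype.ofFinite (DoubleCoset.Quotient (H.comap f : Set A) (H.comap f))
  have hH : H ≤ f.range := le_top.trans_eq (MonoidHom.range_eq_top.2 hf).symm
  rw [transProb_eq_prod rfl, transProb_eq_prod rfl]
  refine Fintype.prod_bijective (doubleCosetMap f H H) ⟨doubleCosetMap_injective f hH, fun D => ?_⟩
    _ _ fun D => by rw [numLeftCosets_doubleCosetMap f hH]
  induction D using Quotient.inductionOn' with | h g => ?_
  obtain ⟨a, rfl⟩ := hf g
  exact ⟨DoubleCoset.mk _ _ a, rfl⟩

end Comap

theorem isLeast_tp (G : Type*) [Group G] [Finite G] :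
    IsLeast (Set.range fun H : Subgroup G => transProb H H) (tp G) := by
  have := Fintype.ofFinite (Subgroup G)
  have htp : tp G = Finset.univ.inf' Finset.univ_nonempty fun H : Subgroup G => transProb H H := by
    unfold tp
    congr!
  rw [htp]
  obtain ⟨H, -, hH⟩ := Finset.exists_mem_eq_inf' Finset.univ_nonempty
    fun H : Subgroup G => transProb H H
  exact ⟨⟨H, hH.symm⟩, Set.forall_mem_range.2 fun H => Finset.inf'_le _ (Finset.mem_univ H)⟩

theorem tp_le_transProb {G : Type*} [Group G] [Finite G] (H : Subgroup G) :
    tp G ≤ transProb H H :=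
  (isLeast_tp G).2 ⟨H, rfl⟩

namespace HasSectionIsomorphicTo

variable {G X Y : Type*} [Group G] [Group X] [Group Y]

theorem tp_le [Finite G] [Finite X] (h : HasSectionIsomorphicTo G X) : tp G ≤ tp X := by
  obtain ⟨L, φ, hφ⟩ := h
  obtain ⟨M, hM⟩ := (isLeast_tp X).1
  have hcomap : ((M.comap φ).map L.subtype).comap L.subtype = M.comap φ :=
    Subgroup.comap_map_eq_self_of_injective L.subtype_injective _
  calc tp G ≤ transProb ((M.comap φ).map L.subtype) ((M.comap φ).map L.subtype) :=
        tp_le_transProb _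
    _ ≤ transProb (M.comap φ) (M.comap φ) :=
        (transProb_le_transProb_comap L.subtype (Subgroup.map_le_range _ _)).trans_eq
          (by rw [hcomap])
    _ = tp X := (transProb_comap φ hφ M).trans hM

theorem of_surjective (f : G →* X) (hf : Function.Surjective f) : HasSectionIsomorphicTo G X :=
  ⟨⊤, f.comp (⊤ : Subgroup G).subtype, fun x => (hf x).imp' (⟨·, trivial⟩) fun _ => id⟩

theorem of_injective (f : X →* G) (hf : Function.Injective f) : HasSectionIsomorphicTo G X :=
  ⟨f.range, (MonoidHom.ofInjective hf).symm.toMonoidHom, (MonoidHom.ofInjective hf).symm.surjective⟩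

theorem trans (hGX : HasSectionIsomorphicTo G X) (hXY : HasSectionIsomorphicTo X Y) :
    HasSectionIsomorphicTo G Y := by
  obtain ⟨H, φ, hφ⟩ := hGX
  obtain ⟨K, ψ, hψ⟩ := hXY
  let e : K.comap φ ≃* (K.comap φ).map H.subtype :=
    (K.comap φ).equivMapOfInjective H.subtype H.subtype_injective
  exact ⟨_, (ψ.comp (φ.subgroupComap K)).comp e.symm.toMonoidHom,
    (hψ.comp (φ.subgroupComap_surjective_of_surjective K hφ)).comp e.symm.surjective⟩

end HasSectionIsomorphicTo

/-- A subgroup `M` is malnormal if `M ∩ gMg⁻¹ = 1` for all `g ∉ M`. -/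
def IsMalnormal {X : Type*} [Group X] (M : Subgroup X) : Prop :=
  ∀ g ∉ M, ∀ a ∈ M, g⁻¹ * a * g ∈ M → a = 1

namespace IsMalnormal

variable {X : Type*} [Group X] {M : Subgroup X} (hM : IsMalnormal M)
include hM

theorem mem_of_commute {a z : X} (ha : a ∈ M) (ha₁ : a ≠ 1) (haz : Commute a z) : z ∈ M := by
  by_contra hz
  exact ha₁ (hM z hz a ha (by rwa [mul_assoc, haz.eq, inv_mul_cancel_left]))

theorem normalCore_eq_bot (hMtop : M ≠ ⊤) : M.normalCore = ⊥ := by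
  obtain ⟨g, hg⟩ := SetLike.exists_not_mem_of_ne_top M hMtop rfl
  refine (Subgroup.eq_bot_iff_forall _).2 fun a ha => hM g hg a (M.normalCore_le ha) ?_
  simpa using M.normalCore_le (M.normalCore_normal.conj_mem a ha g⁻¹)

theorem numLeftCosets_mk {g : X} (hg : g ∉ M) :
    numLeftCosets (DoubleCoset.mk M M g) = Nat.card M := by
  refine (Nat.card_congr <| Equiv.ofBijective
    (fun m : M => ⟨(m * g : X),
      (DoubleCoset.eq M M _ _).2 ⟨m⁻¹, inv_mem m.2, 1, one_mem _, by simp⟩⟩)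
    ⟨fun m m' h => ?_, fun ⟨q, hq⟩ => ?_⟩).symm
  · have hmem := leftCoset_mk_eq_iff.1 (Subtype.ext_iff.1 h)
    refine Subtype.ext (eq_of_inv_mul_eq_one ?_).symm
    exact hM g hg _ (mul_mem (inv_mem m'.2) m.2) (by simpa only [mul_inv_rev, mul_assoc] using hmem)
  · induction q using QuotientGroup.induction_on with | H x => ?_
    obtain ⟨k, hk, h, hh, rfl⟩ := (DoubleCoset.eq M M _ _).1 hq.symm
    exact ⟨⟨k, hk⟩, Subtype.ext (QuotientGroup.eq.2 (by simpa [mul_assoc] using hh))⟩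

theorem exists_index_eq_and_transProb_eq [Finite X] :
    ∃ k, M.index = 1 + k * Nat.card M ∧ transProb M M = bijProb (Nat.card M) ^ k := by
  have := Fintype.ofFinite (DoubleCoset.Quotient (M : Set X) M)
  let D₁ := DoubleCoset.mk M M 1
  have hcard : ∀ D ∈ Finset.univ.erase D₁, numLeftCosets D = Nat.card M := by
    intro D hD
    induction D using Quotient.inductionOn' with | h g => ?_
    refine hM.numLeftCosets_mk fun hg => Finset.ne_of_mem_erase hD ?_
    exact (DoubleCoset.eq M M _ _).2 ⟨g⁻¹, inv_mem hg, 1, one_mem _, by simp⟩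
  refine ⟨(Finset.univ.erase D₁).card, ?_, ?_⟩
  · rw [index_eq_sum_numLeftCosets M, ← Finset.add_sum_erase _ _ (Finset.mem_univ D₁),
      numLeftCosets_mk_one, Finset.sum_congr rfl hcard, Finset.sum_const, smul_eq_mul]
  · rw [transProb_eq_prod rfl, ← Finset.mul_prod_erase _ _ (Finset.mem_univ D₁),
      numLeftCosets_mk_one, Finset.prod_congr rfl fun D hD => by rw [hcard D hD],
      Finset.prod_const]
    norm_num [bijProb]

end IsMalnormal

theorem eq_of_lt_bijProb_pow {m k : ℕ} (hm : 2 ≤ m) (hk : k ≠ 0) (h : 4 / 81 < bijProb m ^ k) :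
    m = 2 ∧ k ≤ 4 ∨ m = 3 ∧ k = 1 ∨ m = 4 ∧ k = 1 := by
  have hlt {i j : ℕ} (hi : i ≤ m) (hj : j ≤ k) : 4 / 81 < bijProb i ^ j :=
    h.trans_le <| (pow_le_pow_left₀ (bijProb_nonneg m) (antitone_bijProb hi) k).trans
      (pow_le_pow_of_le_one (bijProb_nonneg i) (bijProb_le_one i) hj)
  have hm₅ : m < 5 := by
    by_contra! hm
    exact absurd (hlt hm (Nat.one_le_iff_ne_zero.2 hk)) (by norm_num [bijProb, Nat.factorial])
  have hk₅ : k < 5 := by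
    by_contra! hk
    exact absurd (hlt hm hk) (by norm_num [bijProb, Nat.factorial])
  have hmk : 3 ≤ m → k < 2 := by
    intro hm
    by_contra! hk
    exact absurd (hlt hm hk) (by norm_num [bijProb, Nat.factorial])
  lia

section Dihedral

variable {X : Type*} [Group X] {n : ℕ} {t x : X}

/-- The homomorphism `i ↦ x ^ i` from the integers modulo `n`, for `x` with `x ^ n = 1`. -/
def zmodZPowHom (hx : x ^ n = 1) : Multiplicative (ZMod n) →* X :=
  AddMonoidHom.toMultiplicativeLeft <| ZMod.lift n
    ⟨zmultiplesHom _ (Additive.ofMul x), by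
      rw [zmultiplesHom_apply, natCast_zsmul, ← ofMul_pow, hx, ofMul_one]⟩

theorem zmodZPowHom_intCast (hx : x ^ n = 1) (k : ℤ) :
    zmodZPowHom hx (Multiplicative.ofAdd (k : ZMod n)) = x ^ k := by
  simp [zmodZPowHom]

theorem zmodZPowHom_mul_eq (hx : x ^ n = 1) (ht : t * t = 1) (htx : t * x * t = x⁻¹)
    (i : Multiplicative (ZMod n)) : zmodZPowHom hx i * t = t * zmodZPowHom hx i⁻¹ := by
  obtain ⟨k, rfl⟩ : ∃ k : ℤ, i = .ofAdd (k : ZMod n) := (ZMod.intCast_surjective i.toAdd).imp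
    fun k hk => (congrArg Multiplicative.ofAdd hk).symm
  have htinv : t⁻¹ = t := inv_eq_of_mul_eq_one_left ht
  have hconj : t * x ^ k * t = (x ^ k)⁻¹ :=
    calc t * x ^ k * t = (t * x * t⁻¹) ^ k := by rw [conj_zpow, htinv]
      _ = (x ^ k)⁻¹ := by rw [htinv, htx, inv_zpow]
  rw [map_inv, zmodZPowHom_intCast, ← hconj, mul_assoc, ← mul_assoc, ht, one_mul]

/-- The homomorphism from a dihedral group with values `x` and `t` on the standard generators `r 1`
and `sr 0`. -/
def dihedralLift (hx : x ^ n = 1) (ht : t * t = 1) (htx : t * x * t = x⁻¹) :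
    DihedralGroup n →* X :=
  .mk' (fun
    | .r i => zmodZPowHom hx (.ofAdd i)
    | .sr i => t * zmodZPowHom hx (.ofAdd i)) <| by
  have hcomm (i a) : zmodZPowHom hx i * (t * a) = t * (zmodZPowHom hx i⁻¹ * a) := by
    rw [← mul_assoc, zmodZPowHom_mul_eq hx ht htx, mul_assoc]
  rintro (i | i) (j | j)
  · exact map_mul _ _ _
  · rw [hcomm, ← map_mul, ← ofAdd_neg, ← ofAdd_add, neg_add_eq_sub]
    rfl
  · rw [mul_assoc, ← map_mul]
    rfl
  · rw [mul_assoc, hcomm, ← mul_assoc, ht, one_mul, ← map_mul, ← ofAdd_neg, ← ofAdd_add,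
      neg_add_eq_sub]
    rfl

theorem dihedralLift_r_intCast (hx : x ^ n = 1) (ht : t * t = 1) (htx : t * x * t = x⁻¹) (k : ℤ) :
    dihedralLift hx ht htx (.r k) = x ^ k :=
  zmodZPowHom_intCast hx k

theorem dihedralLift_sr_intCast (hx : x ^ n = 1) (ht : t * t = 1) (htx : t * x * t = x⁻¹) (k : ℤ) :
    dihedralLift hx ht htx (.sr k) = t * x ^ k :=
  congrArg (t * ·) (zmodZPowHom_intCast hx k)

theorem dihedralLift_injective (hn : 2 < n) (hx : orderOf x = n) (ht : t * t = 1)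
    (htx : t * x * t = x⁻¹) :
    Function.Injective (dihedralLift (orderOf_dvd_iff_pow_eq_one.1 hx.dvd) ht htx) := by
  rw [injective_iff_map_eq_one]
  rintro (i | i) h <;> obtain ⟨k, rfl⟩ := ZMod.intCast_surjective i
  · rw [dihedralLift_r_intCast, ← orderOf_dvd_iff_zpow_eq_one, hx] at h
    rw [(ZMod.intCast_zmod_eq_zero_iff_dvd k n).2 h]
    rfl
  · rw [dihedralLift_sr_intCast] at h
    have hcomm : Commute t x := by
      rw [eq_inv_of_mul_eq_one_left h, ← zpow_neg]
      exact (Commute.refl x).zpow_left _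
    have hxx : x ^ 2 = 1 := by
      rw [hcomm.eq, mul_assoc, ht, mul_one] at htx
      rw [pow_two, ← eq_inv_iff_mul_eq_one, ← htx]
    exact absurd (Nat.le_of_dvd two_pos (orderOf_dvd_of_pow_eq_one hxx)) (by lia)

theorem hasSection_dihedralGroup (hn : 2 < n) (hx : orderOf x = n) (ht : t * t = 1)
    (htx : t * x * t = x⁻¹) : HasSectionIsomorphicTo X (DihedralGroup n) :=
  .of_injective _ (dihedralLift_injective hn hx ht htx)

end Dihedral

theorem mul_mul_mul_eq_inv_of_mul_self_eq_one {X : Type*} [Group X] {s t : X}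
    (hs : s * s = 1) (ht : t * t = 1) :
    s * (s * t) * s = (s * t)⁻¹ := by
  rw [mul_inv_rev, inv_eq_of_mul_eq_one_left hs, inv_eq_of_mul_eq_one_left ht, ← mul_assoc, hs,
    one_mul]

theorem exists_ne_one_commute_of_even_orderOf_mul {X : Type*} [Group X] {s t : X}
    (hs : s * s = 1) (ht : t * t = 1) (hst : IsOfFinOrder (s * t)) (h : Even (orderOf (s * t))) :
    ∃ z ≠ 1, Commute s z ∧ Commute t z := by
  obtain ⟨n, hn⟩ := h
  have hpos := hst.orderOf_pos
  have hzz : ((s * t) ^ n)⁻¹ = (s * t) ^ n :=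
    inv_eq_of_mul_eq_one_left (by rw [← pow_add, ← hn, pow_orderOf_eq_one])
  have hsinv : s⁻¹ = s := inv_eq_of_mul_eq_one_left hs
  have hsz : Commute s ((s * t) ^ n) := by
    have hconj : s * (s * t) ^ n * s⁻¹ = (s * t) ^ n := by
      rw [← conj_pow, hsinv, mul_mul_mul_eq_inv_of_mul_self_eq_one hs ht, inv_pow, hzz]
    exact mul_inv_eq_iff_eq_mul.1 hconj
  refine ⟨(s * t) ^ n, fun hz => ?_, hsz, ?_⟩
  · exact absurd (Nat.le_of_dvd (by lia) (orderOf_dvd_of_pow_eq_one hz)) (by lia)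
  · have hstz := hsz.mul_left (Commute.self_pow (s * t) n)
    rwa [← mul_assoc, hs, one_mul] at hstz

theorem exists_prime_hasSection_dihedralGroup {X : Type*} [Group X] {s t : X}
    (hs : s * s = 1) (ht : t * t = 1) (hst : s * t ≠ 1) (hodd : Odd (orderOf (s * t))) :
    ∃ p, p.Prime ∧ p ≠ 2 ∧ p ∣ Nat.card X ∧ HasSectionIsomorphicTo X (DihedralGroup p) := by
  set p := (orderOf (s * t)).minFac
  have hp : p.Prime := Nat.minFac_prime (orderOf_eq_one_iff.not.2 hst)
  have hpdvd : p ∣ orderOf (s * t) := Nat.minFac_dvd _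
  have hp₂ : p ≠ 2 := fun h => hodd.not_two_dvd_nat (h ▸ hpdvd)
  have hsinv : s⁻¹ = s := inv_eq_of_mul_eq_one_left hs
  have hconj (k : ℕ) : s * (s * t) ^ k * s = ((s * t) ^ k)⁻¹ :=
    calc s * (s * t) ^ k * s = (s * (s * t) * s⁻¹) ^ k := by rw [conj_pow, hsinv]
      _ = ((s * t) ^ k)⁻¹ := by rw [hsinv, mul_mul_mul_eq_inv_of_mul_self_eq_one hs ht, inv_pow]
  exact ⟨p, hp, hp₂, hpdvd.trans (orderOf_dvd_natCard _),
    hasSection_dihedralGroup (lt_of_le_of_ne hp.two_le hp₂.symm)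
      (orderOf_pow_orderOf_div hodd.pos.ne' hpdvd) hs (hconj _)⟩

theorem IsMalnormal.exists_involutions_odd_orderOf_mul {X : Type*} [Group X] [Finite X]
    {M : Subgroup X} (hM : IsMalnormal M) (hMtop : M ≠ ⊤) (heven : 2 ∣ Nat.card M) :
    ∃ s t : X, s * s = 1 ∧ t * t = 1 ∧ s * t ≠ 1 ∧ Odd (orderOf (s * t)) := by
  have : Fact (Nat.Prime 2) := ⟨Nat.prime_two⟩
  obtain ⟨⟨s, hsM⟩, hs⟩ := exists_prime_orderOf_dvd_card' 2 heven
  rw [Subgroup.orderOf_mk, orderOf_eq_prime_iff, pow_two] at hs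
  obtain ⟨hss, hs₁⟩ := hs
  obtain ⟨g, hg⟩ := SetLike.exists_not_mem_of_ne_top M hMtop rfl
  have htM : g * s * g⁻¹ ∉ M := fun h =>
    hs₁ (hM g⁻¹ (inv_mem_iff.not.2 hg) s hsM (by rwa [inv_inv]))
  have htt : g * s * g⁻¹ * (g * s * g⁻¹) = 1 := by rw [conj_mul, hss, mul_one, mul_inv_cancel]
  refine ⟨s, g * s * g⁻¹, hss, htt, fun h => htM ?_, ?_⟩
  · rwa [eq_inv_of_mul_eq_one_right h, inv_mem_iff]
  · by_contra hodd
    obtain ⟨z, hz₁, hsz, htz⟩ :=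
      exists_ne_one_commute_of_even_orderOf_mul hss htt (isOfFinOrder_of_finite _)
        (Nat.not_odd_iff_even.1 hodd)
    have hzM : z ∈ M := hM.mem_of_commute hsM hs₁ hsz
    exact htM (hM.mem_of_commute hzM hz₁ htz.symm)

theorem hasSection_alternatingGroup {X : Type*} [Group X] [Finite X] {M : Subgroup X}
    (hcore : M.normalCore = ⊥) (hcard : 2 * Nat.card X = M.index.factorial) :
    HasSectionIsomorphicTo X (alternatingGroup (Fin M.index)) := by
  let e : (X ⧸ M) ≃ Fin M.index := Finite.equivFinOfCardEq rfl
  let f : X →* Equiv.Perm (Fin M.index) :=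
    e.permCongrHom.toMonoidHom.comp (MulAction.toPermHom X (X ⧸ M))
  have hf : Function.Injective f := by
    refine e.permCongrHom.injective.comp ?_
    rw [← MonoidHom.ker_eq_bot_iff, ← Subgroup.normalCore_eq_ker, hcore]
  have hrange : f.range = alternatingGroup (Fin M.index) := by
    refine Equiv.Perm.eq_alternatingGroup_of_index_eq_two ?_
    have hmul := f.range.card_mul_index
    rw [Nat.card_perm, Nat.card_fin, ← hcard, ← Nat.card_congr (MonoidHom.ofInjective hf).toEquiv,
      mul_comm 2] at hmul
    exact Nat.eq_of_mul_eq_mul_left Nat.card_pos hmul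
  exact hrange ▸ .of_surjective f.rangeRestrict f.rangeRestrict_surjective

theorem eq_three_or_five_or_seven_of_dvd {p n : ℕ} (hp : p.Prime) (hp₂ : p ≠ 2) (hn : n ≠ 0)
    (hn₉ : n ≤ 9) (hpn : p ∣ n) : p = 3 ∨ p = 5 ∨ p = 7 := by
  have hp₉ : p ≤ 9 := (Nat.le_of_dvd (Nat.pos_of_ne_zero hn) hpn).trans hn₉
  interval_cases p <;> first | decide | exact absurd rfl hp₂ | exact absurd hp (by decide)

theorem IsMalnormal.hasSection_of_lt_tp {X : Type*} [Group X] [Finite X] {M : Subgroup X}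
    (hM : IsMalnormal M) (hbot : M ≠ ⊥) (htop : M ≠ ⊤) (h : 4 / 81 < tp X) :
    HasSectionIsomorphicTo X (alternatingGroup (Fin 4)) ∨
      HasSectionIsomorphicTo X (DihedralGroup 3) ∨
      HasSectionIsomorphicTo X (DihedralGroup 5) ∨
      HasSectionIsomorphicTo X (DihedralGroup 7) := by
  obtain ⟨k, hindex, hprob⟩ := hM.exists_index_eq_and_transProb_eq
  have hcardX := M.card_mul_index
  have hk : k ≠ 0 := by
    rintro rfl
    exact htop (Subgroup.index_eq_one.1 (by simpa using hindex))
  have hmk := eq_of_lt_bijProb_pow (M.one_lt_card_iff_ne_bot.2 hbot) hk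
    (hprob ▸ h.trans_le (tp_le_transProb M))
  by_cases heven : 2 ∣ Nat.card M
  · obtain ⟨s, t, hs, ht, hst, hodd⟩ := hM.exists_involutions_odd_orderOf_mul htop heven
    obtain ⟨p, hp, hp₂, hpX, hD⟩ := exists_prime_hasSection_dihedralGroup hs ht hst hodd
    rw [← hcardX, hindex, hp.dvd_mul] at hpX
    have hsmall : Nat.card M ∣ 2 ^ 2 ∧ 1 + k * Nat.card M ≤ 9 := by
      rcases hmk with ⟨hm, hk⟩ | ⟨hm, rfl⟩ | ⟨hm, rfl⟩ <;> rw [hm] at heven ⊢ <;> lia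
    have hpM : ¬ p ∣ Nat.card M := fun hpM =>
      hp₂ ((Nat.prime_dvd_prime_iff_eq hp Nat.prime_two).1
        (hp.dvd_of_dvd_pow (hpM.trans hsmall.1)))
    have hp₃₅₇ := eq_three_or_five_or_seven_of_dvd hp hp₂ (by lia) hsmall.2
      (hpX.resolve_left hpM)
    rcases hp₃₅₇ with rfl | rfl | rfl
    · exact .inr (.inl hD)
    · exact .inr (.inr (.inl hD))
    · exact .inr (.inr (.inr hD))
  · obtain ⟨hM₃, rfl⟩ : Nat.card M = 3 ∧ k = 1 := by lia
    have hindex₄ : M.index = 4 := by rw [hindex, hM₃]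
    exact .inl (hindex₄ ▸ hasSection_alternatingGroup (hM.normalCore_eq_bot htop)
      (by rw [← hcardX, hM₃, hindex₄]; rfl))

section MinimalNonNilpotent

universe v

/-- A non-nilpotent group all of whose proper subgroups and proper quotients are nilpotent. -/
structure IsMinimalNonNilpotent (X : Type*) [Group X] : Prop where
  not_isNilpotent : ¬ Group.IsNilpotent X
  isNilpotent_of_ne_top : ∀ L : Subgroup X, L ≠ ⊤ → Group.IsNilpotent L
  isNilpotent_quotient : ∀ (N : Subgroup X) [N.Normal], N ≠ ⊥ → Group.IsNilpotent (X ⧸ N)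

theorem exists_card_lt_and_section_not_isNilpotent {G : Type v} [Group G] [Finite G]
    (hG : ¬ Group.IsNilpotent G) (hmin : ¬ IsMinimalNonNilpotent G) :
    ∃ (X : Type v) (_ : Group X) (_ : Finite X),
      HasSectionIsomorphicTo G X ∧ ¬ Group.IsNilpotent X ∧ Nat.card X < Nat.card G := by
  by_cases hsub : ∀ L : Subgroup G, L ≠ ⊤ → Group.IsNilpotent L
  · have hquot : ¬ ∀ (N : Subgroup G) [N.Normal], N ≠ ⊥ → Group.IsNilpotent (G ⧸ N) :=
      fun hquot => hmin ⟨hG, hsub, hquot⟩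
    push Not at hquot
    obtain ⟨N, _, hN, hGN⟩ := hquot
    refine ⟨G ⧸ N, _, inferInstance,
      .of_surjective (QuotientGroup.mk' N) (QuotientGroup.mk'_surjective N), hGN, ?_⟩
    rw [N.card_eq_card_quotient_mul_card_subgroup]
    exact lt_mul_of_one_lt_right Nat.card_pos (N.one_lt_card_iff_ne_bot.2 hN)
  · push Not at hsub
    obtain ⟨L, hL, hLnil⟩ := hsub
    exact ⟨L, _, inferInstance, .of_injective L.subtype L.subtype_injective, hLnil,
      (Subgroup.card_le_card_group L).lt_of_ne fun h => hL (L.eq_top_of_card_eq h)⟩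

theorem exists_isMinimalNonNilpotent_section {G : Type v} [Group G] [Finite G]
    (hG : ¬ Group.IsNilpotent G) :
    ∃ (X : Type v) (_ : Group X) (_ : Finite X),
      HasSectionIsomorphicTo G X ∧ IsMinimalNonNilpotent X := by
  induction hn : Nat.card G using Nat.strong_induction_on generalizing G with | h n ih => ?_
  by_cases hmin : IsMinimalNonNilpotent G
  · exact ⟨G, _, inferInstance, .of_injective (.id G) Function.injective_id, hmin⟩
  · obtain ⟨Y, _, _, hGY, hY, hlt⟩ := exists_card_lt_and_section_not_isNilpotent hG hmin
    obtain ⟨X, _, _, hYX, hX⟩ := ih _ (hn ▸ hlt) hY rfl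
    exact ⟨X, _, inferInstance, hGY.trans hYX, hX⟩

variable {X : Type*} [Group X]

theorem lt_normalizer_inf_of_isNilpotent {D A : Subgroup X} (hDA : D < A)
    (hA : Group.IsNilpotent A) : D < Subgroup.normalizer (D : Set X) ⊓ A := by
  have hlt := Group.normalizerCondition_of_isNilpotent (G := A) (D.subgroupOf A)
    (lt_top_iff_ne_top.2 (Subgroup.subgroupOf_eq_top.not.2 hDA.not_ge))
  rw [← Subgroup.subgroupOf_normalizer_eq hDA.le] at hlt
  obtain ⟨x, hx, hxD⟩ := SetLike.exists_of_lt hlt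
  exact SetLike.lt_iff_le_and_exists.2
    ⟨le_inf Subgroup.le_normalizer hDA.le, (x : X), Subgroup.mem_inf.2 ⟨hx, x.2⟩, hxD⟩

theorem eq_top_of_normalizer_eq_self {M N : Subgroup X} [N.Normal]
    (hN : Group.IsNilpotent (X ⧸ N)) (hNM : N ≤ M)
    (hM : Subgroup.normalizer (M : Set X) = M) : M = ⊤ := by
  have hcomap : (M.map (QuotientGroup.mk' N)).comap (QuotientGroup.mk' N) = M :=
    Subgroup.comap_map_eq_self (by rwa [QuotientGroup.ker_mk'])
  by_contra htop
  have hlt : M.map (QuotientGroup.mk' N) < ⊤ := by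
    refine lt_top_iff_ne_top.2 fun h => htop ?_
    rw [← hcomap, h, Subgroup.comap_top]
  refine (Group.normalizerCondition_of_isNilpotent (G := X ⧸ N) _ hlt).ne
    (Subgroup.comap_injective (QuotientGroup.mk'_surjective N) ?_)
  rw [Subgroup.comap_normalizer_eq_of_surjective _ (QuotientGroup.mk'_surjective N), hcomap, hM]

theorem normalizer_eq_self_of_isCoatom {M : Subgroup X} (hM : IsCoatom M) (hMn : ¬ M.Normal) :
    Subgroup.normalizer (M : Set X) = M :=
  (hM.le_iff.1 Subgroup.le_normalizer).resolve_left fun h =>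
    hMn (Subgroup.normalizer_eq_top_iff.1 h)

theorem inf_lt_left_of_isCoatom {L M : Subgroup X} (hL : IsCoatom L) (hM : IsCoatom M)
    (hne : L ≠ M) : M ⊓ L < M :=
  inf_lt_left.2 fun h => (hM.le_iff.1 h).elim hL.1 hne

namespace IsMinimalNonNilpotent

variable (hX : IsMinimalNonNilpotent X) {M : Subgroup X} (hM : IsCoatom M) (hMn : ¬ M.Normal)
include hX hM hMn

theorem eq_bot_of_le {N : Subgroup X} [N.Normal] (hNM : N ≤ M) : N = ⊥ := by
  by_contra hN
  exact hM.1 (eq_top_of_normalizer_eq_self (hX.isNilpotent_quotient N hN) hNM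
    (normalizer_eq_self_of_isCoatom hM hMn))

/-- Normalizers grow in the nilpotent groups `M` and `L`, so a maximal subgroup above the normalizer
of `M ⊓ L` meets `M` in more than `M ⊓ L`, and it is not `M` itself. -/
theorem exists_isCoatom_inf_lt_inf [Finite X] {L : Subgroup X} (hL : IsCoatom L) (hLM : L ≠ M)
    (hbot : M ⊓ L ≠ ⊥) : ∃ K, IsCoatom K ∧ K ≠ M ∧ M ⊓ L < M ⊓ K := by
  have hltM := lt_normalizer_inf_of_isNilpotent (inf_lt_left_of_isCoatom hL hM hLM)
    (hX.isNilpotent_of_ne_top M hM.1)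
  have hltL := lt_normalizer_inf_of_isNilpotent
    (inf_comm L M ▸ inf_lt_left_of_isCoatom hM hL hLM.symm) (hX.isNilpotent_of_ne_top L hL.1)
  have htop : Subgroup.normalizer ((M ⊓ L : Subgroup X) : Set X) ≠ ⊤ := fun h =>
    have := Subgroup.normalizer_eq_top_iff.1 h
    hbot (hX.eq_bot_of_le hM hMn inf_le_left)
  obtain ⟨K, hK, hle⟩ := (eq_top_or_exists_le_coatom _).resolve_left htop
  refine ⟨K, hK, ?_, hltM.trans_le (le_inf inf_le_right (inf_le_left.trans hle))⟩
  rintro rfl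
  exact hltL.not_ge (inf_le_inf_right L hle)

theorem inf_eq_bot [Finite X] {L : Subgroup X} (hL : IsCoatom L) (hLM : L ≠ M) :
    M ⊓ L = ⊥ := by
  by_contra hbot
  obtain ⟨L', ⟨hL', hL'M, hbot'⟩, hmax⟩ :=
    (Set.toFinite {L | IsCoatom L ∧ L ≠ M ∧ M ⊓ L ≠ ⊥}).exists_maximalFor (M ⊓ ·) _
      ⟨L, hL, hLM, hbot⟩
  obtain ⟨K, hK, hKM, hlt⟩ := hX.exists_isCoatom_inf_lt_inf hM hMn hL' hL'M hbot'
  exact hlt.not_ge (hmax ⟨hK, hKM, ne_bot_of_gt hlt⟩ hlt.le)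

theorem isMalnormal [Finite X] : IsMalnormal M := by
  intro g hg a ha hga
  have hne : M.map (MulAut.conj g).toMonoidHom ≠ M := fun h => hg <| by
    rwa [← normalizer_eq_self_of_isCoatom hM hMn, Subgroup.mem_normalizer_iff_map_conj_eq]
  have hmem : a ∈ M ⊓ M.map (MulAut.conj g).toMonoidHom :=
    ⟨ha, g⁻¹ * a * g, hga, by simp [mul_assoc]⟩
  have hcoatom : IsCoatom (M.map (MulAut.conj g).toMonoidHom) :=
    ((MulAut.conj g).mapSubgroup.isCoatom_iff M).2 hM
  rwa [hX.inf_eq_bot hM hMn hcoatom hne, Subgroup.mem_bot] at hmem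

end IsMinimalNonNilpotent

theorem IsMinimalNonNilpotent.exists_isMalnormal [Finite X] (hX : IsMinimalNonNilpotent X) :
    ∃ M : Subgroup X, IsMalnormal M ∧ M ≠ ⊥ ∧ M ≠ ⊤ := by
  have hnormal := ((Group.isNilpotent_of_finite_tfae (G := X)).out 0 2).not.1 hX.not_isNilpotent
  push Not at hnormal
  obtain ⟨M, hM, hMn⟩ := hnormal
  exact ⟨M, hX.isMalnormal hM hMn, fun h => hMn (h ▸ inferInstance), hM.1⟩

end MinimalNonNilpotent

theorem stmt15 (G : Type*) [Group G] [Finite G] (h : tp G > (4 / 81 : ℚ)) :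
    Group.IsNilpotent G ∨
      HasSectionIsomorphicTo G (alternatingGroup (Fin 4)) ∨
      HasSectionIsomorphicTo G (DihedralGroup 3) ∨
      HasSectionIsomorphicTo G (DihedralGroup 5) ∨
      HasSectionIsomorphicTo G (DihedralGroup 7) := by
  refine or_iff_not_imp_left.2 fun hG => ?_
  obtain ⟨X, _, _, hGX, hX⟩ := exists_isMinimalNonNilpotent_section hG
  obtain ⟨M, hM, hbot, htop⟩ := hX.exists_isMalnormal
  exact (hM.hasSection_of_lt_tp hbot htop (h.trans_le hGX.tp_le)).imp hGX.trans
    (.imp hGX.trans (.imp hGX.trans hGX.trans))
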